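/- Let $T$ be a finite tree with vertex set $V$ of size $n$, and for each edge $\{A,B\}$ of $T$ let $d(A,B)$ and $d(B,A)$ be elements of a commutative ring. For arbitrary vertices $A, B$, define $d(A,B)$ as the product of $d(A_i, A_{i+1})$ along the unique path $A = A_1, \dots, A_k = B$ in $T$, with $d(A,A) = 1$. Then the determinant of the $n \times n$ matrix $(d(B,A))_{A,B \in V}$ equals $\prod_{\{A,B\} \in E(T)} (1 - d(A,B)\, d(B,A))$. -/

import Mathlib

theorem det_aux {R : Type*} [CommRing R] {V : Type*} [Fintype V] [DecidableEq V]
    (M : Matrix V V R) (f : V → ℕ) (h : ∀ i j, i ≠ j → f j ≤ f i → M i j = 0) :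
    M.det = ∏ i, M i i := by
  let g : V → ℕ ×ₗ Fin (Fintype.card V) := fun v => toLex (f v, Fintype.equivFin V v)
  have hg : Function.Injective g := by
    intro a b hab
    have := congrArg (fun x => (ofLex x).2) hab
    simpa [g] using this
  letI : LinearOrder V := LinearOrder.lift' g hg
  have hM : M.BlockTriangular id := by
    intro i j hij
    have h1 : g j < g i := hij
    refine h i j ?_ ?_
    · rintro rfl
      exact lt_irrefl _ h1
    · have := Prod.Lex.toLex_lt_toLex.1 h1
      rcases this with h | h
      · exact h.le
      · exact h.1.le
  have := Matrix.det_of_upperTriangular hM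
  convert this

theorem geo_aux {V : Type*} (G : SimpleGraph V) {a b x : V}
    (p : G.Walk a b) (hp : p.length = G.dist a b) (hx : x ∈ p.support) (hc : G.Connected) :
    G.dist a x + G.dist x b = G.dist a b := by
  classical
  have h1 := SimpleGraph.dist_le (p.takeUntil x hx)
  have h2 := SimpleGraph.dist_le (p.dropUntil x hx)
  have h3 := congrArg SimpleGraph.Walk.length (p.take_spec hx)
  rw [SimpleGraph.Walk.length_append] at h3
  have := hc.dist_triangle (u := a) (v := x) (w := b)
  omega

theorem key_aux {V : Type*} (G : SimpleGraph V) (hT : G.IsTree) {r u v B : V}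
    (huv : G.Adj u v) (hr : G.dist r v = G.dist r u + 1)
    (hB : G.dist B u = G.dist B v + 1) : G.dist r B = G.dist r v + G.dist v B := by
  have hc := hT.connected
  obtain ⟨p, hp, hpl⟩ := hc.exists_path_of_dist r u
  obtain ⟨q, hq, hql⟩ := hc.exists_path_of_dist v B
  have hd : ∀ x ∈ p.support, x ∉ q.support := by
    intro x hx hx'
    have h1 := geo_aux G p hpl hx hc
    have h2 := geo_aux G q hql hx' hc
    have h3 := hc.dist_triangle (u := r) (v := x) (w := v)
    have h4 := hc.dist_triangle (u := B) (v := x) (w := u)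
    rw [G.dist_comm (u := B) (v := x), G.dist_comm (u := B) (v := v)] at *
    rw [G.dist_comm (u := v) (v := x)] at h2
    omega
  have hw : (p.append (SimpleGraph.Walk.cons huv q)).IsPath := by
    rw [SimpleGraph.Walk.isPath_def, SimpleGraph.Walk.support_append]
    simp only [SimpleGraph.Walk.support_cons, List.tail_cons]
    exact List.nodup_append.2 ⟨hp.support_nodup, hq.support_nodup, by
      rintro a ha b hb rfl
      exact hd a ha hb⟩
  obtain ⟨s, hs, hsl⟩ := hc.exists_path_of_dist r B
  have := (hT.existsUnique_path r B).unique hs hw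
  rw [← hsl, this, SimpleGraph.Walk.length_append, SimpleGraph.Walk.length_cons]
  omega

theorem parent_aux {V : Type*} (G : SimpleGraph V) (hT : G.IsTree) (r v : V) (hv : v ≠ r) :
    ∃ u, G.Adj u v ∧ G.dist r v = G.dist r u + 1 := by
  have hc := hT.connected
  obtain ⟨p, hpl⟩ := hc.exists_walk_length_eq_dist v r
  cases p with
  | nil => exact absurd rfl hv
  | @cons _ u _ h q =>
    refine ⟨u, h.symm, ?_⟩
    have h1 := SimpleGraph.dist_le q
    rcases hT.dist_eq_dist_add_one_of_adj r h with h2 | h2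
    · exact h2
    · rw [SimpleGraph.Walk.length_cons] at hpl
      rw [G.dist_comm (u := r), G.dist_comm (u := r)] at h2
      omega

theorem stmt_7 {R : Type*} [CommRing R] {V : Type*} [Fintype V] [DecidableEq V]
    (G : SimpleGraph V) [DecidableRel G.Adj] (hT : G.IsTree)
    (d : V → V → R)
    (hrefl : ∀ A, d A A = 1)
    (hmul : ∀ A B C : V, G.dist A C + G.dist C B = G.dist A B → d A B = d A C * d C B) :
    (Matrix.of fun A B : V => d B A).det =
      ∏ e ∈ G.edgeFinset,
        Sym2.lift ⟨fun A B => 1 - d A B * d B A, fun A B => by ring⟩ e := by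
  have hc := hT.connected
  obtain ⟨r⟩ := hc.nonempty
  have hpar : ∀ v, ∃ u, v ≠ r → G.Adj u v ∧ G.dist r v = G.dist r u + 1 := by
    intro v
    by_cases hv : v = r
    · exact ⟨v, fun h => absurd hv h⟩
    · obtain ⟨u, hu⟩ := parent_aux G hT r v hv
      exact ⟨u, fun _ => hu⟩
  choose π hπ using hpar
  let M : Matrix V V R := Matrix.of fun A B : V => d B A
  let N : Matrix V V R := Matrix.of fun v w => if v ≠ r ∧ w = π v then d (π v) v else 0
  have hL : (1 - N).det = 1 := by
    rw [← Matrix.det_transpose, det_aux _ (fun v => G.dist r v)]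
    · apply Finset.prod_eq_one
      intro i _
      have : ¬ (i ≠ r ∧ i = π i) := by
        rintro ⟨h, h'⟩
        have := (hπ i h).1
        rw [← h'] at this
        exact G.loopless.irrefl i this
      simp only [Matrix.transpose_apply, Matrix.sub_apply, Matrix.one_apply_eq, N, Matrix.of_apply,
        if_neg this, sub_zero]
    · intro i j hij hle
      have : ¬ (j ≠ r ∧ i = π j) := by
        rintro ⟨h, h'⟩
        have := (hπ j h).2
        rw [← h'] at this
        omega
      simp only [Matrix.transpose_apply, Matrix.sub_apply, Matrix.one_apply_ne hij.symm, N,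
        Matrix.of_apply, if_neg this, sub_zero]
  have hNM : ∀ v B, ((1 - N) * M) v B = d B v - if v ≠ r then d (π v) v * d B (π v) else 0 := by
    intro v B
    rw [sub_mul, one_mul, Matrix.sub_apply, Matrix.mul_apply]
    by_cases hv : v = r
    · simp [N, M, hv]
    · simp [N, M, hv]
  have hd1 : ∀ a b, G.Adj a b → G.dist a b = 1 := fun a b h => SimpleGraph.dist_eq_one_iff_adj.2 h
  have hM' : ((1 - N) * M).det = ∏ v, if v = r then 1 else (1 - d v (π v) * d (π v) v) := by
    rw [det_aux _ (fun v => G.dist r v)]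
    · refine Finset.prod_congr rfl fun v _ => ?_
      rw [hNM, hrefl]
      by_cases hv : v = r
      · simp [hv]
      · simp [hv, mul_comm]
    · intro v B hvB hle
      rw [hNM]
      by_cases hv : v = r
      · subst hv
        simp only [SimpleGraph.dist_self, Nat.le_zero] at hle
        exact absurd (hc.dist_eq_zero_iff.1 hle) hvB
      · obtain ⟨h1, h2⟩ := hπ v hv
        rcases hT.dist_eq_dist_add_one_of_adj B h1 with h3 | h3
        · have := key_aux G hT h1 h2 h3
          have h4 := hc.pos_dist_of_ne hvB
          omega
        · rw [if_pos hv, hmul B v (π v) (by rw [hd1 _ _ h1, h3])]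
          ring
  have hdet : M.det = ((1 - N) * M).det := by rw [Matrix.det_mul, hL, one_mul]
  change M.det = _
  rw [hdet, hM', ← Finset.mul_prod_erase _ _ (Finset.mem_univ r), if_pos rfl, one_mul]
  have huniq : ∀ a b, G.Adj b a → G.dist r a = G.dist r b + 1 → a ≠ r ∧ π a = b := by
    intro a b hab h
    have ha : a ≠ r := by
      rintro rfl
      simp at h
    refine ⟨ha, ?_⟩
    obtain ⟨h1, h2⟩ := hπ a ha
    rcases hT.dist_eq_dist_add_one_of_adj b h1 with h3 | h3
    · have := key_aux G hT h1 h2 h3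
      omega
    · rw [hd1 _ _ hab] at h3
      exact (hc.dist_eq_zero_iff.1 (by omega : G.dist b (π a) = 0)).symm
  refine Finset.prod_bij (fun v _ => s(v, π v)) ?_ ?_ ?_ ?_
  · intro v hv
    simpa using (hπ v (Finset.ne_of_mem_erase hv)).1.symm
  · intro v hv w hw h
    have h1 := (hπ v (Finset.ne_of_mem_erase hv)).2
    have h2 := (hπ w (Finset.ne_of_mem_erase hw)).2
    rcases Sym2.eq_iff.1 h with h | h
    · exact h.1
    · rw [h.2] at h1
      rw [← h.1] at h2
      omega
  · intro e he
    induction e using Sym2.ind with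
    | _ a b =>
      have hab : G.Adj a b := by simpa using he
      rcases hT.dist_eq_dist_add_one_of_adj r hab with h | h
      · obtain ⟨h1, h2⟩ := huniq a b hab.symm h
        exact ⟨a, by simpa using h1, by rw [h2]⟩
      · obtain ⟨h1, h2⟩ := huniq b a hab h
        exact ⟨b, by simpa using h1, by rw [h2, Sym2.eq_swap]⟩
  · intro v hv
    rw [if_neg (Finset.ne_of_mem_erase hv)]
    rfl
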